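/- Let Z : ℤ³ → ℂ be a central charge whose values on the three standard basis vectors lie in ℍ, which is generic (any two nonzero vectors of ℕ³ with equal phase are ℚ-proportional, i.e. have a common positive integer multiple) and which satisfies φ(0,0,1) < φ(1,1,1) < φ(1,0,0). Then a nonzero nilpotent representation of the quiver with potential (Q, W) whose phase equals φ(1,1,1) is stable if and only if it is isomorphic to M(a₁b₂) or to M(a₂b₁); in particular, up to isomorphism there are precisely two stable representations of phase φ(1,1,1). -/

import Mathlib

/-!
# Statement 0

Work over `ℂ`.  Let `Q` be the quiver with vertices `A, B, C` and arrows `a₁, a₂ : A → B`,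
`b₁, b₂ : B → C`, `c₁, c₂ : C → A`, with potential `W = a₁b₁c₁ + a₂b₂c₂`, whose Jacobian
relations are `f_{b₁}∘f_{a₁} = 0`, `f_{c₁}∘f_{b₁} = 0`, `f_{a₁}∘f_{c₁} = 0`,
`f_{b₂}∘f_{a₂} = 0`, `f_{c₂}∘f_{b₂} = 0`, `f_{a₂}∘f_{c₂} = 0`.

Let `Z : ℤ³ → ℂ` be a central charge whose values on the three standard basis vectors lie
in `ℍ`, which is generic (any two nonzero vectors of `ℕ³` with equal phase are
`ℚ`-proportional, i.e. have a common positive integer multiple) and which satisfies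
`φ(0,0,1) < φ(1,1,1) < φ(1,0,0)`.  Then a nonzero nilpotent representation of `(Q, W)`
whose phase equals `φ(1,1,1)` is stable if and only if it is isomorphic to `M(a₁b₂)` or to
`M(a₂b₁)`; in particular, up to isomorphism there are precisely two stable representations
of phase `φ(1,1,1)`.
-/

noncomputable section
open Module

/-- The set `ℍ = {r·exp(iπφ) : r > 0, 0 < φ ≤ 1} ⊆ ℂ`. -/
def UpperH : Set ℂ :=
  {z | ∃ r φ : ℝ, 0 < r ∧ 0 < φ ∧ φ ≤ 1 ∧ z = (r : ℂ) * Complex.exp ((Real.pi * φ : ℝ) * Complex.I)}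

/-- The phase `φ ∈ (0, 1]` of a complex number `z ∈ ℍ`: if `z = r·exp(iπφ)` with `r > 0` and
`0 < φ ≤ 1`, then `Complex.arg z = π·φ`, so that `phase z = φ` is the unique `φ ∈ (0,1]`
with `z ∈ ℝ_{>0}·exp(iπφ)`. -/
def phase (z : ℂ) : ℝ := Complex.arg z / Real.pi

/-- A representation of the quiver `Q` (vertices `A, B, C`; arrows `a₁, a₂ : A → B`,
`b₁, b₂ : B → C`, `c₁, c₂ : C → A`) satisfying the Jacobian relations of the potential
`W = a₁b₁c₁ + a₂b₂c₂`. -/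
structure Rep3 where
  VA : Type
  VB : Type
  VC : Type
  [acgA : AddCommGroup VA]
  [acgB : AddCommGroup VB]
  [acgC : AddCommGroup VC]
  [modA : Module ℂ VA]
  [modB : Module ℂ VB]
  [modC : Module ℂ VC]
  [fdA : FiniteDimensional ℂ VA]
  [fdB : FiniteDimensional ℂ VB]
  [fdC : FiniteDimensional ℂ VC]
  fa1 : VA →ₗ[ℂ] VB
  fa2 : VA →ₗ[ℂ] VB
  fb1 : VB →ₗ[ℂ] VC
  fb2 : VB →ₗ[ℂ] VC
  fc1 : VC →ₗ[ℂ] VA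
  fc2 : VC →ₗ[ℂ] VA
  rel_ba1 : fb1 ∘ₗ fa1 = 0
  rel_cb1 : fc1 ∘ₗ fb1 = 0
  rel_ac1 : fa1 ∘ₗ fc1 = 0
  rel_ba2 : fb2 ∘ₗ fa2 = 0
  rel_cb2 : fc2 ∘ₗ fb2 = 0
  rel_ac2 : fa2 ∘ₗ fc2 = 0

attribute [instance] Rep3.acgA Rep3.acgB Rep3.acgC Rep3.modA Rep3.modB Rep3.modC
  Rep3.fdA Rep3.fdB Rep3.fdC

/-- The six arrows of the quiver. -/
inductive Arrow3 | a1 | a2 | b1 | b2 | c1 | c2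
deriving DecidableEq

namespace Rep3

/-- The dimension vector `(dim V_A, dim V_B, dim V_C)`. -/
def dimVec (M : Rep3) : ℕ × ℕ × ℕ := (finrank ℂ M.VA, finrank ℂ M.VB, finrank ℂ M.VC)

/-- The total space `V_A × V_B × V_C` of a representation. -/
abbrev Tot (M : Rep3) : Type := M.VA × M.VB × M.VC

/-- The endomorphism of the total space `V_A × V_B × V_C` induced by one of the six
structure maps (extended by zero on the other components). -/
def toEnd (M : Rep3) : Arrow3 → (M.Tot →ₗ[ℂ] M.Tot)
  | .a1 => LinearMap.prod 0 (LinearMap.prod (M.fa1 ∘ₗ LinearMap.fst ℂ M.VA (M.VB × M.VC)) 0)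
  | .a2 => LinearMap.prod 0 (LinearMap.prod (M.fa2 ∘ₗ LinearMap.fst ℂ M.VA (M.VB × M.VC)) 0)
  | .b1 => LinearMap.prod 0 (LinearMap.prod 0
      (M.fb1 ∘ₗ LinearMap.fst ℂ M.VB M.VC ∘ₗ LinearMap.snd ℂ M.VA (M.VB × M.VC)))
  | .b2 => LinearMap.prod 0 (LinearMap.prod 0
      (M.fb2 ∘ₗ LinearMap.fst ℂ M.VB M.VC ∘ₗ LinearMap.snd ℂ M.VA (M.VB × M.VC)))
  | .c1 => LinearMap.prod
      (M.fc1 ∘ₗ LinearMap.snd ℂ M.VB M.VC ∘ₗ LinearMap.snd ℂ M.VA (M.VB × M.VC)) 0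
  | .c2 => LinearMap.prod
      (M.fc2 ∘ₗ LinearMap.snd ℂ M.VB M.VC ∘ₗ LinearMap.snd ℂ M.VA (M.VB × M.VC)) 0

/-- A representation is nilpotent if there is `N` such that every composite of `N` of the
six structure maps is zero.  (Composites are taken inside the endomorphisms of the total
space `V_A × V_B × V_C`; non-composable composites vanish automatically there, so this is
equivalent to the vanishing of all composable composites of length `N`.) -/
def IsNilpotentRep (M : Rep3) : Prop :=
  ∃ N : ℕ, ∀ l : List Arrow3, l.length = N → (l.map M.toEnd).prod = 0

/-- A subrepresentation: a triple of submodules closed under the six structure maps. -/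
structure Sub (M : Rep3) where
  SA : Submodule ℂ M.VA
  SB : Submodule ℂ M.VB
  SC : Submodule ℂ M.VC
  mapsto_a1 : ∀ x ∈ SA, M.fa1 x ∈ SB
  mapsto_a2 : ∀ x ∈ SA, M.fa2 x ∈ SB
  mapsto_b1 : ∀ y ∈ SB, M.fb1 y ∈ SC
  mapsto_b2 : ∀ y ∈ SB, M.fb2 y ∈ SC
  mapsto_c1 : ∀ z ∈ SC, M.fc1 z ∈ SA
  mapsto_c2 : ∀ z ∈ SC, M.fc2 z ∈ SA

/-- The dimension vector of a subrepresentation. -/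
def Sub.dimVec {M : Rep3} (L : M.Sub) : ℕ × ℕ × ℕ :=
  (finrank ℂ L.SA, finrank ℂ L.SB, finrank ℂ L.SC)

/-- The subrepresentation is nonzero. -/
def Sub.Nonzero {M : Rep3} (L : M.Sub) : Prop := L.SA ≠ ⊥ ∨ L.SB ≠ ⊥ ∨ L.SC ≠ ⊥

/-- The subrepresentation is proper. -/
def Sub.Proper {M : Rep3} (L : M.Sub) : Prop := L.SA ≠ ⊤ ∨ L.SB ≠ ⊤ ∨ L.SC ≠ ⊤

end Rep3

/-- The value of the central charge on a dimension vector in `ℕ³`. -/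
def chargeOf3 (Z : ℤ × ℤ × ℤ →+ ℂ) (d : ℕ × ℕ × ℕ) : ℂ :=
  Z ((d.1 : ℤ), (d.2.1 : ℤ), (d.2.2 : ℤ))

/-- A nonzero representation `M` is stable if `φ(dim L) < φ(dim M)` for every nonzero
proper subrepresentation `L` of `M`. -/
def IsStable3 (Z : ℤ × ℤ × ℤ →+ ℂ) (M : Rep3) : Prop :=
  M.dimVec ≠ (0, 0, 0) ∧
    ∀ L : M.Sub, L.Nonzero → L.Proper →
      phase (chargeOf3 Z L.dimVec) < phase (chargeOf3 Z M.dimVec)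

/-- Isomorphism of representations. -/
def RepIso3 (M N : Rep3) : Prop :=
  ∃ (eA : M.VA ≃ₗ[ℂ] N.VA) (eB : M.VB ≃ₗ[ℂ] N.VB) (eC : M.VC ≃ₗ[ℂ] N.VC),
    (∀ x, eB (M.fa1 x) = N.fa1 (eA x)) ∧ (∀ x, eB (M.fa2 x) = N.fa2 (eA x)) ∧
    (∀ y, eC (M.fb1 y) = N.fb1 (eB y)) ∧ (∀ y, eC (M.fb2 y) = N.fb2 (eB y)) ∧
    (∀ z, eA (M.fc1 z) = N.fc1 (eC z)) ∧ (∀ z, eA (M.fc2 z) = N.fc2 (eC z))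

/-- The string module `M(a₁b₂)`: `V_A = V_B = V_C = ℂ`, `f_{a₁} = f_{b₂} = id`, all other
maps zero. -/
def Ma1b2 : Rep3 where
  VA := ℂ
  VB := ℂ
  VC := ℂ
  fa1 := LinearMap.id
  fa2 := 0
  fb1 := 0
  fb2 := LinearMap.id
  fc1 := 0
  fc2 := 0
  rel_ba1 := by simp
  rel_cb1 := by simp
  rel_ac1 := by simp
  rel_ba2 := by simp
  rel_cb2 := by simp
  rel_ac2 := by simp

/-- The string module `M(a₂b₁)`: `V_A = V_B = V_C = ℂ`, `f_{a₂} = f_{b₁} = id`, all other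
maps zero. -/
def Ma2b1 : Rep3 where
  VA := ℂ
  VB := ℂ
  VC := ℂ
  fa1 := 0
  fa2 := LinearMap.id
  fb1 := LinearMap.id
  fb2 := 0
  fc1 := 0
  fc2 := 0
  rel_ba1 := by simp
  rel_cb1 := by simp
  rel_ac1 := by simp
  rel_ba2 := by simp
  rel_cb2 := by simp
  rel_ac2 := by simp


namespace TS

/-- Oriented area. -/
def det2 (z w : ℂ) : ℝ := z.re * w.im - z.im * w.re

lemma det2_eq (z w : ℂ) :
    det2 z w = ‖z‖ * ‖w‖ * Real.sin (Complex.arg w - Complex.arg z) := by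
  have h1 := Complex.norm_mul_cos_arg z
  have h2 := Complex.norm_mul_sin_arg z
  have h3 := Complex.norm_mul_cos_arg w
  have h4 := Complex.norm_mul_sin_arg w
  rw [det2, Real.sin_sub, ← h1, ← h2, ← h3, ← h4]
  ring

lemma upper_iff (z : ℂ) : z ∈ UpperH ↔ (0 < z.im ∨ (z.im = 0 ∧ z.re < 0)) := by
  constructor
  · rintro ⟨r, φ, hr, h0, h1, rfl⟩
    have hpi := Real.pi_pos
    simp only [Complex.re_ofReal_mul, Complex.im_ofReal_mul, Complex.exp_ofReal_mul_I_re,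
      Complex.exp_ofReal_mul_I_im]
    rcases h1.lt_or_eq with h | h
    · left
      exact mul_pos hr (Real.sin_pos_of_pos_of_lt_pi (by positivity) (by nlinarith))
    · right
      subst h
      simp [hr]
  · intro h
    have hpi := Real.pi_pos
    have hz : z ≠ 0 := by
      rintro rfl
      simp at h
    refine ⟨‖z‖, Complex.arg z / Real.pi, norm_pos_iff.mpr hz, ?_, ?_, ?_⟩
    · apply div_pos _ hpi
      rcases h with h | ⟨h, h'⟩
      · exact lt_of_le_of_ne (Complex.arg_nonneg_iff.mpr h.le) (fun h0 => by
          have := Complex.arg_eq_zero_iff.mp h0.symm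
          linarith [this.2])
      · rw [Complex.arg_eq_pi_iff.mpr ⟨h', h⟩]; exact hpi
    · rw [div_le_one hpi]; exact Complex.arg_le_pi z
    · rw [mul_div_cancel₀ _ hpi.ne']
      exact (Complex.norm_mul_exp_arg_mul_I z).symm

lemma arg_pos {z : ℂ} (hz : z ∈ UpperH) : 0 < Complex.arg z := by
  rw [upper_iff] at hz
  rcases hz with h | ⟨h, h'⟩
  · exact lt_of_le_of_ne (Complex.arg_nonneg_iff.mpr h.le) (fun h0 => by
      have := Complex.arg_eq_zero_iff.mp h0.symm
      linarith [this.2])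
  · rw [Complex.arg_eq_pi_iff.mpr ⟨h', h⟩]; exact Real.pi_pos

lemma ne_zero {z : ℂ} (hz : z ∈ UpperH) : z ≠ 0 := by
  rintro rfl
  rw [upper_iff] at hz
  simp at hz

lemma upper_add {z w : ℂ} (hz : z ∈ UpperH) (hw : w ∈ UpperH) : z + w ∈ UpperH := by
  rw [upper_iff] at *
  simp only [Complex.add_re, Complex.add_im]
  rcases hz with h | ⟨h, h'⟩ <;> rcases hw with k | ⟨k, k'⟩
  · left; linarith
  · left; linarith
  · left; linarith
  · right; constructor <;> linarith

lemma upper_smul {z : ℂ} (hz : z ∈ UpperH) {n : ℕ} (hn : n ≠ 0) : (n : ℂ) * z ∈ UpperH := by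
  have : (0 : ℝ) < n := by positivity
  rw [upper_iff] at *
  simp only [Complex.mul_re, Complex.mul_im, Complex.natCast_re, Complex.natCast_im, zero_mul,
    sub_zero, add_zero]
  rcases hz with h | ⟨h, h'⟩
  · left; positivity
  · right; exact ⟨by simp [h], by nlinarith⟩

lemma det2_pos {z w : ℂ} (hz : z ∈ UpperH) (hw : w ∈ UpperH) (h : phase z < phase w) :
    0 < det2 z w := by
  have hpi := Real.pi_pos
  rw [phase, phase, div_lt_div_iff_of_pos_right hpi] at h
  rw [det2_eq]
  have := arg_pos hz
  have := Complex.arg_le_pi w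
  have := norm_pos_iff.mpr (ne_zero hz)
  have := norm_pos_iff.mpr (ne_zero hw)
  have := Real.sin_pos_of_pos_of_lt_pi (x := Complex.arg w - Complex.arg z)
    (by linarith) (by linarith)
  positivity

lemma det2_swap (z w : ℂ) : det2 z w = - det2 w z := by
  simp only [det2]; ring

lemma phase_lt {z w : ℂ} (hz : z ∈ UpperH) (hw : w ∈ UpperH) :
    phase z < phase w ↔ det2 w z < 0 := by
  constructor
  · intro h
    have := det2_pos hz hw h
    rw [det2_swap] at this
    linarith
  · intro h
    by_contra h'
    rcases (not_lt.mp h').lt_or_eq with k | k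
    · have := det2_pos hw hz k
      linarith
    · have hpi := Real.pi_pos
      have : Complex.arg w = Complex.arg z := by
        simp only [phase] at k
        field_simp at k
        exact k
      rw [det2_eq, this] at h
      simp at h

lemma charge_eq (Z : ℤ × ℤ × ℤ →+ ℂ) (d : ℕ × ℕ × ℕ) :
    chargeOf3 Z d = d.1 * Z (1,0,0) + d.2.1 * Z (0,1,0) + d.2.2 * Z (0,0,1) := by
  have : (((d.1 : ℤ), (d.2.1 : ℤ), (d.2.2 : ℤ)) : ℤ × ℤ × ℤ)
      = d.1 • (1,0,0) + d.2.1 • (0,1,0) + d.2.2 • (0,0,1) := by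
    simp
  rw [chargeOf3, this]
  rw [map_add, map_add, map_nsmul, map_nsmul, map_nsmul]
  simp only [nsmul_eq_mul]

lemma charge_upper (Z : ℤ × ℤ × ℤ →+ ℂ)
    (hZA : Z (1, 0, 0) ∈ UpperH) (hZB : Z (0, 1, 0) ∈ UpperH) (hZC : Z (0, 0, 1) ∈ UpperH)
    (d : ℕ × ℕ × ℕ) (hd : d ≠ (0,0,0)) : chargeOf3 Z d ∈ UpperH := by
  obtain ⟨a, b, c⟩ := d
  rw [charge_eq]
  simp only
  rcases eq_or_ne a 0 with rfl | ha <;> rcases eq_or_ne b 0 with rfl | hb <;>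
    rcases eq_or_ne c 0 with rfl | hc <;>
    try simp only [Nat.cast_zero, zero_mul, zero_add, add_zero]
  · exact absurd rfl hd
  all_goals
    first
    | exact upper_add (upper_add (upper_smul hZA ha) (upper_smul hZB hb)) (upper_smul hZC hc)
    | exact upper_add (upper_smul hZA ha) (upper_smul hZB hb)
    | exact upper_add (upper_smul hZA ha) (upper_smul hZC hc)
    | exact upper_add (upper_smul hZB hb) (upper_smul hZC hc)
    | exact upper_smul hZA ha
    | exact upper_smul hZB hb
    | exact upper_smul hZC hc

lemma det2_charge (Z : ℤ × ℤ × ℤ →+ ℂ) (t : ℂ) (d : ℕ × ℕ × ℕ) :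
    det2 t (chargeOf3 Z d) = d.1 * det2 t (Z (1,0,0)) + d.2.1 * det2 t (Z (0,1,0))
      + d.2.2 * det2 t (Z (0,0,1)) := by
  rw [charge_eq]
  simp [det2]
  ring

lemma Sub.dim_ne {M : Rep3} (L : M.Sub) (h : L.Nonzero) : L.dimVec ≠ (0,0,0) := by
  intro h0
  simp only [Rep3.Sub.dimVec, Prod.mk.injEq, Submodule.finrank_eq_zero] at h0
  rcases h with h | h | h
  · exact h h0.1
  · exact h h0.2.1
  · exact h h0.2.2

/-- Numerical stability. -/
def NStable (p q r : ℝ) (M : Rep3) : Prop :=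
  ∀ L : M.Sub, L.Nonzero → L.Proper →
    (finrank ℂ L.SA : ℝ) * p + (finrank ℂ L.SB : ℝ) * q + (finrank ℂ L.SC : ℝ) * r < 0

lemma structure_lemma {p q r : ℝ} (hp : 0 < p) (hr : r < 0) (hs : p + q + r = 0)
    (M : Rep3) (n : ℕ) (hn : 0 < n) (hA : finrank ℂ M.VA = n) (hB : finrank ℂ M.VB = n)
    (hC : finrank ℂ M.VC = n) (hst : NStable p q r M) :
    (∀ x, M.fa1 x = 0 → M.fa2 x = 0 → x = 0) ∧
    (∀ x, M.fa1 x ≠ 0 → M.fb2 (M.fa1 x) ≠ 0) ∧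
    (∀ x, M.fa2 x ≠ 0 → M.fb1 (M.fa2 x) ≠ 0) ∧
    (∃ x, x ≠ 0 ∧ (M.fa1 x = 0 ∨ M.fa2 x = 0)) := by
  have nA : Nontrivial M.VA := Module.nontrivial_of_finrank_pos (R := ℂ) (by omega)
  have nB : Nontrivial M.VB := Module.nontrivial_of_finrank_pos (R := ℂ) (by omega)
  have nC : Nontrivial M.VC := Module.nontrivial_of_finrank_pos (R := ℂ) (by omega)
  -- simple at A
  have s1 : LinearMap.ker M.fa1 ⊓ LinearMap.ker M.fa2 = ⊥ := by
    by_contra hne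
    have := hst ⟨LinearMap.ker M.fa1 ⊓ LinearMap.ker M.fa2, ⊥, ⊥,
      fun x hx => by simpa using hx.1, fun x hx => by simpa using hx.2,
      fun y hy => by simp at hy; simp [hy], fun y hy => by simp at hy; simp [hy],
      fun y hy => by simp at hy; simp [hy], fun y hy => by simp at hy; simp [hy]⟩
      (Or.inl hne) (Or.inr (Or.inl bot_ne_top))
    simp only [finrank_bot] at this
    have h0 : (0:ℝ) ≤ (finrank ℂ ↥(LinearMap.ker M.fa1 ⊓ LinearMap.ker M.fa2) : ℝ) * p := by
      positivity
    simp only [Nat.cast_zero, zero_mul, add_zero] at this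
    linarith
  have s2 : LinearMap.range M.fb1 ⊔ LinearMap.range M.fb2 = ⊤ := by
    by_contra hne
    have := hst ⟨⊤, ⊤, LinearMap.range M.fb1 ⊔ LinearMap.range M.fb2,
      fun x hx => trivial, fun x hx => trivial,
      fun y hy => Submodule.mem_sup_left ⟨y, rfl⟩, fun y hy => Submodule.mem_sup_right ⟨y, rfl⟩,
      fun x hx => trivial, fun x hx => trivial⟩
      (Or.inl top_ne_bot) (Or.inr (Or.inr hne))
    simp only [finrank_top, hA, hB] at this
    have h0 : (finrank ℂ ↥(LinearMap.range M.fb1 ⊔ LinearMap.range M.fb2) : ℝ) ≤ n := by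
      rw [← hC]; exact_mod_cast Submodule.finrank_le _
    nlinarith
  have s3 : LinearMap.ker M.fb1 ⊓ LinearMap.ker M.fb2 = ⊥ ∨
      LinearMap.range M.fa1 ⊔ LinearMap.range M.fa2 = ⊤ := by
    rcases le_total 0 q with hq | hq
    · left
      by_contra hne
      have := hst ⟨⊥, LinearMap.ker M.fb1 ⊓ LinearMap.ker M.fb2, ⊥,
        fun y hy => by simp at hy; simp [hy], fun y hy => by simp at hy; simp [hy],
        fun x hx => by simpa using hx.1, fun x hx => by simpa using hx.2,
        fun y hy => by simp at hy; simp [hy], fun y hy => by simp at hy; simp [hy]⟩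
        (Or.inr (Or.inl hne)) (Or.inl bot_ne_top)
      simp only [finrank_bot] at this
      have h0 : (0:ℝ) ≤ (finrank ℂ ↥(LinearMap.ker M.fb1 ⊓ LinearMap.ker M.fb2) : ℝ) * q := by
        positivity
      simp only [Nat.cast_zero, zero_mul, add_zero, zero_add] at this
      linarith
    · right
      by_contra hne
      have := hst ⟨⊤, LinearMap.range M.fa1 ⊔ LinearMap.range M.fa2, ⊤,
        fun y hy => Submodule.mem_sup_left ⟨y, rfl⟩, fun y hy => Submodule.mem_sup_right ⟨y, rfl⟩,
        fun x hx => trivial, fun x hx => trivial,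
        fun x hx => trivial, fun x hx => trivial⟩
        (Or.inl top_ne_bot) (Or.inr (Or.inl hne))
      simp only [finrank_top, hA, hC] at this
      have h0 : (finrank ℂ ↥(LinearMap.range M.fa1 ⊔ LinearMap.range M.fa2) : ℝ) ≤ n := by
        rw [← hB]; exact_mod_cast Submodule.finrank_le _
      nlinarith
  have i1 : LinearMap.range M.fa1 ≤ LinearMap.ker M.fb1 :=
    LinearMap.range_le_ker_iff.mpr M.rel_ba1
  have i2 : LinearMap.range M.fa2 ≤ LinearMap.ker M.fb2 :=
    LinearMap.range_le_ker_iff.mpr M.rel_ba2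
  have d1 := Submodule.finrank_mono i1
  have d2 := Submodule.finrank_mono i2
  have ra1 := LinearMap.finrank_range_add_finrank_ker M.fa1
  have ra2 := LinearMap.finrank_range_add_finrank_ker M.fa2
  have rb1 := LinearMap.finrank_range_add_finrank_ker M.fb1
  have rb2 := LinearMap.finrank_range_add_finrank_ker M.fb2
  have e1 := Submodule.finrank_sup_add_finrank_inf_eq (LinearMap.ker M.fa1) (LinearMap.ker M.fa2)
  have e1' := Submodule.finrank_le (LinearMap.ker M.fa1 ⊔ LinearMap.ker M.fa2)
  have e2 := Submodule.finrank_sup_add_finrank_inf_eq (LinearMap.range M.fb1)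
    (LinearMap.range M.fb2)
  have e3 := Submodule.finrank_sup_add_finrank_inf_eq (LinearMap.range M.fa1)
    (LinearMap.range M.fa2)
  rw [s1, finrank_bot] at e1
  rw [s2, finrank_top] at e2
  have key : finrank ℂ (LinearMap.range M.fa1) + finrank ℂ (LinearMap.range M.fa2) = n ∧
      LinearMap.range M.fa1 ⊓ LinearMap.range M.fa2 = ⊥ := by
    rcases s3 with s3 | s3
    · exact ⟨by omega, by rw [eq_bot_iff, ← s3]; exact inf_le_inf i1 i2⟩
    · rw [s3, finrank_top] at e3
      refine ⟨by omega, ?_⟩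
      apply (Submodule.finrank_eq_zero (R := ℂ)).mp
      omega
  obtain ⟨k1, k2⟩ := key
  have j1 : LinearMap.range M.fa1 = LinearMap.ker M.fb1 :=
    Submodule.eq_of_le_of_finrank_le i1 (by omega)
  have j2 : LinearMap.range M.fa2 = LinearMap.ker M.fb2 :=
    Submodule.eq_of_le_of_finrank_le i2 (by omega)
  refine ⟨?_, ?_, ?_, ?_⟩
  · intro x h h'
    have : x ∈ LinearMap.ker M.fa1 ⊓ LinearMap.ker M.fa2 := ⟨h, h'⟩
    rw [s1] at this
    exact this
  · intro x hx h
    have : M.fa1 x ∈ LinearMap.range M.fa1 ⊓ LinearMap.range M.fa2 := by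
      refine ⟨⟨x, rfl⟩, ?_⟩
      rw [j2]; exact h
    rw [k2] at this
    exact hx this
  · intro x hx h
    have : M.fa2 x ∈ LinearMap.range M.fa1 ⊓ LinearMap.range M.fa2 := by
      refine ⟨?_, ⟨x, rfl⟩⟩
      rw [j1]; exact h
    rw [k2] at this
    exact hx this
  · by_contra hcon
    push Not at hcon
    have z1 : LinearMap.ker M.fa1 = ⊥ := by
      rw [eq_bot_iff]; intro x hx
      by_contra hx0
      exact (hcon x hx0).1 hx
    have z2 : LinearMap.ker M.fa2 = ⊥ := by
      rw [eq_bot_iff]; intro x hx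
      by_contra hx0
      exact (hcon x hx0).2 hx
    rw [z1, finrank_bot] at ra1
    rw [z2, finrank_bot] at ra2
    omega

lemma exists_good (M : Rep3) (hnil : M.IsNilpotentRep)
    (hex : ∃ x, x ≠ 0 ∧ (M.fa1 x = 0 ∨ M.fa2 x = 0)) :
    (∃ x, x ≠ 0 ∧ M.fa2 x = 0 ∧ M.fc1 (M.fb2 (M.fa1 x)) = 0) ∨
    (∃ x, x ≠ 0 ∧ M.fa1 x = 0 ∧ M.fc2 (M.fb1 (M.fa2 x)) = 0) := by
  by_contra hcon
  push Not at hcon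
  obtain ⟨g2, g1⟩ := hcon
  obtain ⟨N, hN⟩ := hnil
  obtain ⟨x, hx0, hx⟩ := hex
  have key : ∀ k : ℕ, ∃ l : List Arrow3, l.length = 3 * k ∧ ∃ w : M.VA, w ≠ 0 ∧
      (M.fa1 w = 0 ∨ M.fa2 w = 0) ∧
      ((l.map M.toEnd).prod : M.Tot →ₗ[ℂ] M.Tot) (x, 0, 0) = (w, 0, 0) := by
    intro k
    induction k with
    | zero => exact ⟨[], rfl, x, hx0, hx, rfl⟩
    | succ k ih =>
      obtain ⟨l, hl, w, hw0, hw, hlw⟩ := ih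
      rcases hw with hw | hw
      · refine ⟨.c2 :: .b1 :: .a2 :: l, by simp [hl]; ring, M.fc2 (M.fb1 (M.fa2 w)),
          g1 w hw0 hw, Or.inr (LinearMap.congr_fun M.rel_ac2 _), ?_⟩
        simp only [List.map_cons, List.prod_cons, Module.End.mul_apply, hlw]
        simp [Rep3.toEnd]
        rfl
      · refine ⟨.c1 :: .b2 :: .a1 :: l, by simp [hl]; ring, M.fc1 (M.fb2 (M.fa1 w)),
          g2 w hw0 hw, Or.inl (LinearMap.congr_fun M.rel_ac1 _), ?_⟩
        simp only [List.map_cons, List.prod_cons, Module.End.mul_apply, hlw]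
        simp [Rep3.toEnd]
        rfl
  obtain ⟨l, hl, w, hw0, -, hlw⟩ := key N
  have : (l.map M.toEnd).prod = 0 := by
    rw [← List.take_append_drop N l, List.map_append, List.prod_append,
      hN (l.take N) (by rw [List.length_take]; omega), zero_mul]
  rw [this] at hlw
  exact hw0 (congrArg Prod.fst hlw).symm

/-- Coordinates from a spanning nonzero vector. -/
lemma exists_coord {V : Type} [AddCommGroup V] [Module ℂ V] (v : V) (hv : v ≠ 0)
    (h : Submodule.span ℂ {v} = ⊤) : ∃ e : V ≃ₗ[ℂ] ℂ, ∀ x, e x • v = x := by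
  have hb : Function.Bijective (LinearMap.toSpanSingleton ℂ V v) := by
    constructor
    · intro a b hab
      exact smul_left_injective ℂ hv hab
    · rw [← LinearMap.range_eq_top, LinearMap.range_toSpanSingleton, h]
  refine ⟨(LinearEquiv.ofBijective _ hb).symm, fun x => ?_⟩
  exact (LinearEquiv.ofBijective _ hb).apply_symm_apply x

lemma span_map {V W : Type} [AddCommGroup V] [Module ℂ V] [AddCommGroup W] [Module ℂ W]
    (f : V →ₗ[ℂ] W) (v : V) (S : Submodule ℂ W) (h : f v ∈ S) :
    ∀ x ∈ Submodule.span ℂ {v}, f x ∈ S := by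
  intro x hx
  obtain ⟨c, rfl⟩ := Submodule.mem_span_singleton.mp hx
  rw [map_smul]
  exact S.smul_mem c h

lemma coord_eq {V W : Type} [AddCommGroup V] [Module ℂ V] [AddCommGroup W] [Module ℂ W]
    (f : V →ₗ[ℂ] W) (v : V) (w : W) (hw : w ≠ 0) (e : V ≃ₗ[ℂ] ℂ) (e' : W ≃ₗ[ℂ] ℂ)
    (he : ∀ x, e x • v = x) (he' : ∀ x, e' x • w = x) (hf : f v = w) (x : V) :
    e' (f x) = e x := by
  apply smul_left_injective ℂ hw
  change e' (f x) • w = e x • w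
  rw [he', ← hf, ← map_smul, he]

lemma coord_zero {V W : Type} [AddCommGroup V] [Module ℂ V] [AddCommGroup W] [Module ℂ W]
    (f : V →ₗ[ℂ] W) (v : V) (e : V ≃ₗ[ℂ] ℂ) (e' : W ≃ₗ[ℂ] ℂ)
    (he : ∀ x, e x • v = x) (hf : f v = 0) (x : V) :
    e' (f x) = 0 := by
  rw [← he x, map_smul, hf, smul_zero, map_zero]

lemma forward {p q r : ℝ} (hp : 0 < p) (hr : r < 0) (hs : p + q + r = 0)
    (M : Rep3) (hnil : M.IsNilpotentRep) (n : ℕ) (hn : 0 < n) (hA : finrank ℂ M.VA = n)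
    (hB : finrank ℂ M.VB = n)
    (hC : finrank ℂ M.VC = n) (hst : NStable p q r M) :
    RepIso3 M Ma1b2 ∨ RepIso3 M Ma2b1 := by
  obtain ⟨t1, t2, t3, t4⟩ := structure_lemma hp hr hs M n hn hA hB hC hst
  rcases exists_good M hnil t4 with ⟨v, hv, h2, hc⟩ | ⟨v, hv, h2, hc⟩
  · left
    have h1 : M.fa1 v ≠ 0 := fun h => hv (t1 v h h2)
    have h3 := t2 v h1
    have hz1 : M.fb1 (M.fa1 v) = 0 := LinearMap.congr_fun M.rel_ba1 v
    have hz2 : M.fc2 (M.fb2 (M.fa1 v)) = 0 := LinearMap.congr_fun M.rel_cb2 _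
    let L : M.Sub := ⟨Submodule.span ℂ {v}, Submodule.span ℂ {M.fa1 v},
      Submodule.span ℂ {M.fb2 (M.fa1 v)},
      span_map _ _ _ (Submodule.mem_span_singleton_self _),
      span_map _ _ _ (by rw [h2]; exact zero_mem _),
      span_map _ _ _ (by rw [hz1]; exact zero_mem _),
      span_map _ _ _ (Submodule.mem_span_singleton_self _),
      span_map _ _ _ (by rw [hc]; exact zero_mem _),
      span_map _ _ _ (by rw [hz2]; exact zero_mem _)⟩
    have hL : ¬ L.Proper := by
      intro hP
      have := hst L (Or.inl (by simpa [L] using hv)) hP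
      simp only [L, finrank_span_singleton hv, finrank_span_singleton h1,
        finrank_span_singleton h3] at this
      norm_num at this
      linarith
    simp only [Rep3.Sub.Proper, L, not_or, not_not] at hL
    obtain ⟨l1, l2, l3⟩ := hL
    obtain ⟨eA, hA⟩ := exists_coord _ hv l1
    obtain ⟨eB, hB⟩ := exists_coord _ h1 l2
    obtain ⟨eC, hC⟩ := exists_coord _ h3 l3
    exact ⟨eA, eB, eC, coord_eq _ _ _ h1 _ _ hA hB rfl, coord_zero _ _ _ _ hA h2,
      coord_zero _ _ _ _ hB hz1, coord_eq _ _ _ h3 _ _ hB hC rfl,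
      coord_zero _ _ _ _ hC hc, coord_zero _ _ _ _ hC hz2⟩
  · right
    have h1 : M.fa2 v ≠ 0 := fun h => hv (t1 v h2 h)
    have h3 := t3 v h1
    have hz1 : M.fb2 (M.fa2 v) = 0 := LinearMap.congr_fun M.rel_ba2 v
    have hz2 : M.fc1 (M.fb1 (M.fa2 v)) = 0 := LinearMap.congr_fun M.rel_cb1 _
    let L : M.Sub := ⟨Submodule.span ℂ {v}, Submodule.span ℂ {M.fa2 v},
      Submodule.span ℂ {M.fb1 (M.fa2 v)},
      span_map _ _ _ (by rw [h2]; exact zero_mem _),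
      span_map _ _ _ (Submodule.mem_span_singleton_self _),
      span_map _ _ _ (Submodule.mem_span_singleton_self _),
      span_map _ _ _ (by rw [hz1]; exact zero_mem _),
      span_map _ _ _ (by rw [hz2]; exact zero_mem _),
      span_map _ _ _ (by rw [hc]; exact zero_mem _)⟩
    have hL : ¬ L.Proper := by
      intro hP
      have := hst L (Or.inl (by simpa [L] using hv)) hP
      simp only [L, finrank_span_singleton hv, finrank_span_singleton h1,
        finrank_span_singleton h3] at this
      norm_num at this
      linarith
    simp only [Rep3.Sub.Proper, L, not_or, not_not] at hL
    obtain ⟨l1, l2, l3⟩ := hL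
    obtain ⟨eA, hA⟩ := exists_coord _ hv l1
    obtain ⟨eB, hB⟩ := exists_coord _ h1 l2
    obtain ⟨eC, hC⟩ := exists_coord _ h3 l3
    exact ⟨eA, eB, eC, coord_zero _ _ _ _ hA h2, coord_eq _ _ _ h1 _ _ hA hB rfl,
      coord_eq _ _ _ h3 _ _ hB hC rfl, coord_zero _ _ _ _ hB hz1,
      coord_zero _ _ _ _ hC hz2, coord_zero _ _ _ _ hC hc⟩

lemma sub_dichotomy {V : Type} [AddCommGroup V] [Module ℂ V] [FiniteDimensional ℂ V]
    (e : V ≃ₗ[ℂ] ℂ) (S : Submodule ℂ V) :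
    (S = ⊥ ∧ finrank ℂ S = 0) ∨ (S = ⊤ ∧ finrank ℂ S = 1) := by
  have h1 : finrank ℂ V = 1 := by rw [e.finrank_eq, finrank_self]
  have h := Submodule.finrank_le S
  rcases Nat.eq_zero_or_pos (finrank ℂ S) with h0 | h0
  · exact Or.inl ⟨Submodule.finrank_eq_zero.mp h0, h0⟩
  · refine Or.inr ⟨Submodule.eq_top_of_finrank_eq (by omega), by omega⟩

lemma backward {p q r : ℝ} (hp : 0 < p) (hr : r < 0) (hs : p + q + r = 0)
    (M : Rep3) (eA : M.VA ≃ₗ[ℂ] ℂ) (eB : M.VB ≃ₗ[ℂ] ℂ) (eC : M.VC ≃ₗ[ℂ] ℂ)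
    (g : M.VA →ₗ[ℂ] M.VB) (h : M.VB →ₗ[ℂ] M.VC)
    (hg : ∀ x, eB (g x) = eA x) (hh : ∀ y, eC (h y) = eB y)
    (sg : ∀ L : M.Sub, ∀ x ∈ L.SA, g x ∈ L.SB) (sh : ∀ L : M.Sub, ∀ x ∈ L.SB, h x ∈ L.SC) :
    NStable p q r M := by
  intro L hnz hpr
  have gs : Function.Surjective g := fun y =>
    ⟨eA.symm (eB y), eB.injective (by rw [hg, LinearEquiv.apply_symm_apply])⟩
  have hs' : Function.Surjective h := fun y =>
    ⟨eB.symm (eC y), eC.injective (by rw [hh, LinearEquiv.apply_symm_apply])⟩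
  have u1 : L.SA = ⊤ → L.SB = ⊤ := by
    intro k
    rw [eq_top_iff]; rintro y -
    obtain ⟨x, rfl⟩ := gs y
    exact sg L x (by rw [k]; trivial)
  have u2 : L.SB = ⊤ → L.SC = ⊤ := by
    intro k
    rw [eq_top_iff]; rintro y -
    obtain ⟨x, rfl⟩ := hs' y
    exact sh L x (by rw [k]; trivial)
  have v1 : L.SA ≠ ⊤ := by
    intro k
    rcases hpr with k' | k' | k'
    · exact k' k
    · exact k' (u1 k)
    · exact k' (u2 (u1 k))
  rcases sub_dichotomy eA L.SA with ⟨a, a'⟩ | ⟨a, a'⟩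
  swap
  · exact absurd a v1
  rcases sub_dichotomy eC L.SC with ⟨c, c'⟩ | ⟨c, c'⟩
  · rcases sub_dichotomy eB L.SB with ⟨b, b'⟩ | ⟨b, b'⟩
    · rcases hnz with k | k | k <;> exact absurd (by assumption) k
    · have : Nontrivial M.VC := eC.toEquiv.nontrivial
      exact absurd ((u2 b).symm.trans c) top_ne_bot
  · rcases sub_dichotomy eB L.SB with ⟨b, b'⟩ | ⟨b, b'⟩
    · rw [a', b', c']; norm_num; exact hr
    · rw [a', b', c']; norm_num; linarith

end TS

/-- Let `Z : ℤ³ → ℂ` be a central charge whose values on the three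
standard basis vectors lie in `ℍ`, which is generic, and which satisfies
`φ(0,0,1) < φ(1,1,1) < φ(1,0,0)`.  Then a nonzero nilpotent representation of `(Q, W)`
whose phase equals `φ(1,1,1)` is stable if and only if it is isomorphic to `M(a₁b₂)` or to
`M(a₂b₁)`; and `M(a₁b₂) ≇ M(a₂b₁)`, so that up to isomorphism there are precisely two
stable representations of phase `φ(1,1,1)`. -/
theorem two_stables_of_phase_theta
    (Z : ℤ × ℤ × ℤ →+ ℂ)
    (hZA : Z (1, 0, 0) ∈ UpperH) (hZB : Z (0, 1, 0) ∈ UpperH) (hZC : Z (0, 0, 1) ∈ UpperH)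
    (hgen : ∀ d d' : ℕ × ℕ × ℕ, d ≠ (0, 0, 0) → d' ≠ (0, 0, 0) →
      phase (chargeOf3 Z d) = phase (chargeOf3 Z d') →
      ∃ m n : ℕ, 0 < m ∧ 0 < n ∧ m • d = n • d')
    (h1 : phase (Z (0, 0, 1)) < phase (Z (1, 1, 1)))
    (h2 : phase (Z (1, 1, 1)) < phase (Z (1, 0, 0))) :
    (∀ M : Rep3, Rep3.IsNilpotentRep M → M.dimVec ≠ (0, 0, 0) →
      phase (chargeOf3 Z M.dimVec) = phase (Z (1, 1, 1)) →
      (IsStable3 Z M ↔ (RepIso3 M Ma1b2 ∨ RepIso3 M Ma2b1))) ∧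
    ¬ RepIso3 Ma1b2 Ma2b1 := by
  have hT : Z (1,1,1) = Z (1,0,0) + Z (0,1,0) + Z (0,0,1) := by
    rw [← map_add, ← map_add]; rfl
  have uT : Z (1,1,1) ∈ UpperH := by
    rw [hT]; exact TS.upper_add (TS.upper_add hZA hZB) hZC
  have hp : 0 < TS.det2 (Z (1,1,1)) (Z (1,0,0)) := TS.det2_pos uT hZA h2
  have hr : TS.det2 (Z (1,1,1)) (Z (0,0,1)) < 0 := (TS.phase_lt hZC uT).mp h1
  have hs : TS.det2 (Z (1,1,1)) (Z (1,0,0)) + TS.det2 (Z (1,1,1)) (Z (0,1,0))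
      + TS.det2 (Z (1,1,1)) (Z (0,0,1)) = 0 := by
    rw [hT]; simp only [TS.det2, Complex.add_re, Complex.add_im]; ring
  refine ⟨?_, ?_⟩
  · intro M hnil hd hph
    have hiff : IsStable3 Z M ↔ TS.NStable (TS.det2 (Z (1,1,1)) (Z (1,0,0)))
        (TS.det2 (Z (1,1,1)) (Z (0,1,0))) (TS.det2 (Z (1,1,1)) (Z (0,0,1))) M := by
      have aux : ∀ L : M.Sub, L.Nonzero → (phase (chargeOf3 Z L.dimVec) <
          phase (chargeOf3 Z M.dimVec) ↔ (finrank ℂ L.SA : ℝ) * TS.det2 (Z (1,1,1)) (Z (1,0,0))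
          + (finrank ℂ L.SB : ℝ) * TS.det2 (Z (1,1,1)) (Z (0,1,0))
          + (finrank ℂ L.SC : ℝ) * TS.det2 (Z (1,1,1)) (Z (0,0,1)) < 0) := by
        intro L hL
        rw [hph, TS.phase_lt (TS.charge_upper Z hZA hZB hZC _ (TS.Sub.dim_ne L hL)) uT,
          TS.det2_charge]
        rfl
      constructor
      · intro h L hL hP
        exact (aux L hL).mp (h.2 L hL hP)
      · intro h
        exact ⟨hd, fun L hL hP => (aux L hL).mpr (h L hL hP)⟩
    rw [hiff]
    constructor
    · intro hst
      obtain ⟨m, k, hm, hk, hmk⟩ := hgen M.dimVec (1,1,1) hd (by simp) (by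
        rw [hph]; simp [chargeOf3])
      simp only [Rep3.dimVec, Prod.smul_mk, Prod.mk.injEq, smul_eq_mul, mul_one] at hmk
      obtain ⟨e1, e2, e3⟩ := hmk
      have hB : finrank ℂ M.VB = finrank ℂ M.VA :=
        Nat.eq_of_mul_eq_mul_left hm (by rw [e1, e2])
      have hC : finrank ℂ M.VC = finrank ℂ M.VA :=
        Nat.eq_of_mul_eq_mul_left hm (by rw [e1, e3])
      have hn : 0 < finrank ℂ M.VA := by
        rcases Nat.eq_zero_or_pos (finrank ℂ M.VA) with h | h
        · rw [h] at e1; omega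
        · exact h
      exact TS.forward hp hr hs M hnil _ hn rfl hB hC hst
    · rintro (⟨eA, eB, eC, q1, q2, q3, q4, q5, q6⟩ | ⟨eA, eB, eC, q1, q2, q3, q4, q5, q6⟩)
      · exact TS.backward hp hr hs M eA eB eC M.fa1 M.fb2 q1 q4 (fun L => L.mapsto_a1)
          (fun L => L.mapsto_b2)
      · exact TS.backward hp hr hs M eA eB eC M.fa2 M.fb1 q2 q3 (fun L => L.mapsto_a2)
          (fun L => L.mapsto_b1)
  · rintro ⟨eA, eB, eC, q1, q2, q3, q4, q5, q6⟩
    have h : eB (1 : ℂ) = (0 : ℂ) := q1 (1 : ℂ)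
    have h' : (1 : ℂ) = 0 := eB.map_eq_zero_iff.mp h
    exact one_ne_zero h'
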